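/- One has a² + m·b² ≡ 15 (mod 16) and a·b ≡ 4 (mod 8); equivalently, the fundamental unit satisfies the congruence ε² ≡ −1 + 8√m (mod 16·ℤ[√m]). -/

import Mathlib

/-!
Write the Pell equation as `(a - 1) (a + 1) = m b²` if `a` is even and as
`((a - 1) / 2) ((a + 1) / 2) = m (b / 2)²` if `a` is odd. The two factors on the left are coprime,
so they are `d r²` and `e s²` with `d e = m`, and `e s² - d r² = c` with `c = 2`, respectively
`c = 1`. Reading this equation modulo each `ℓ_i` with `i ≥ 2` determines the symbol `(d / ℓ_i)` or
`(e / ℓ_i)`, whose value also depends on the parity of the number of primes dividing `d`.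
For `c = 1` this leaves only `d = 1`, impossible modulo 4, and `e = 1`, which makes `a + b √m` the
square of a smaller solution. So `a` is even, and for `c = 2` the symbols together with the
equation modulo 8 force `d ≡ 3 (mod 8)`, whence `a = d r² + 1 ≡ 4 (mod 8)`.
-/

open scoped NumberTheorySymbols

section Jacobi

theorem jacobiSym_eq_of_mul_sq_modEq {u s c : ℤ} {n : ℕ} (h : u * s ^ 2 ≡ c [ZMOD n])
    (hc : c.gcd n = 1) : J(u | n) = J(c | n) := by
  have hs : s.gcd n = 1 := by
    have hcop : IsCoprime (u * s ^ 2) n := by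
      rw [Int.isCoprime_iff_gcd_eq_one, ← Int.gcd_emod, h.eq, Int.gcd_emod, hc]
    exact Int.isCoprime_iff_gcd_eq_one.mp
      (hcop.of_isCoprime_of_dvd_left ((dvd_pow_self s two_ne_zero).mul_left u))
  calc J(u | n) = J(u * s ^ 2 | n) := by rw [jacobiSym.mul_left, jacobiSym.sq_one' hs, mul_one]
    _ = J(c | n) := jacobiSym.mod_left' h

theorem jacobiSym_eq_of_mul_sq_eq_add_of_dvd_right {d e r s c p : ℕ} (h : e * s ^ 2 = d * r ^ 2 + c)
    (hp : p ∣ d) (hc : c.Coprime p) : J(e | p) = J(c | p) := by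
  refine jacobiSym_eq_of_mul_sq_modEq (s := s) ?_ hc
  have hmod : e * s ^ 2 ≡ c [MOD p] := by
    simpa [h] using ((Nat.modEq_zero_iff_dvd.mpr (hp.mul_right (r ^ 2))).add_right c)
  exact_mod_cast Int.natCast_modEq_iff.mpr hmod

theorem jacobiSym_eq_of_mul_sq_eq_add_of_dvd_left {d e r s c p : ℕ} (h : e * s ^ 2 = d * r ^ 2 + c)
    (hp : p ∣ e) (hp4 : p % 4 = 1) (hc : c.Coprime p) : J(d | p) = J(c | p) := by
  have hneg : J(-c | p) = J(c | p) := by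
    rw [jacobiSym.neg _ (Nat.odd_iff.mpr (by lia)), ZMod.χ₄_nat_one_mod_four hp4, one_mul]
  rw [← hneg]
  refine jacobiSym_eq_of_mul_sq_modEq (s := r) ?_ (by rwa [Int.neg_gcd])
  have hsub : -c - d * (r : ℤ) ^ 2 = -(e * (s : ℤ) ^ 2) := by
    have : (e * s ^ 2 : ℤ) = d * r ^ 2 + c := by exact_mod_cast h
    linarith
  rw [Int.modEq_iff_dvd, hsub]
  exact ((Int.natCast_dvd_natCast.mpr hp).mul_right _).neg_right

theorem jacobiSym_two_of_mod_eight_eq_five {n : ℕ} (hn : n % 8 = 5) : J(2 | n) = -1 := by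
  rw [jacobiSym.at_two (Nat.odd_iff.mpr (by lia)), ZMod.χ₈_nat_eq_if_mod_eight,
    if_neg (by lia), if_neg (by lia)]

theorem jacobiSym_prod_left {ι : Type*} (f : ι → ℤ) (U : Finset ι) (n : ℕ) :
    J(∏ i ∈ U, f i | n) = ∏ i ∈ U, J(f i | n) := by
  classical
  induction U using Finset.induction_on with
  | empty => simp
  | insert i U hi ih => rw [Finset.prod_insert hi, Finset.prod_insert hi, jacobiSym.mul_left, ih]

end Jacobi

section Residues

theorem mul_sq_mod_eight_of_odd {x : ℕ} (c : ℕ) (hx : Odd x) : c * x ^ 2 % 8 = c % 8 := by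
  have hsq : 1 ≡ x ^ 2 [MOD 8] :=
    (Nat.modEq_iff_dvd' (Nat.one_le_pow _ _ hx.pos)).mpr (Nat.eight_dvd_sq_sub_one_of_odd hx)
  rw [← hsq.mul_left c, mul_one]

theorem mul_sq_ne_sq_add_one_of_mod_four_eq_three {m : ℤ} (hm : m % 4 = 3) (x y : ℤ) :
    m * x ^ 2 ≠ y ^ 2 + 1 := by
  intro h
  have hm' : (m : ZMod 4) = 3 := by
    exact_mod_cast (ZMod.intCast_eq_intCast_iff m 3 4).mpr hm
  have hcast : (3 : ZMod 4) * (x : ZMod 4) ^ 2 = (y : ZMod 4) ^ 2 + 1 := by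
    rw [← hm']
    exact_mod_cast congrArg (Int.cast : ℤ → ZMod 4) h
  have hne : ∀ u v : ZMod 4, 3 * u ^ 2 ≠ v ^ 2 + 1 := by decide
  exact hne _ _ hcast

theorem prod_mod_eight_of_forall_eq_five {ι : Type*} {l : ι → ℕ} {U : Finset ι}
    (h : ∀ i ∈ U, l i % 8 = 5) : (∏ i ∈ U, l i) % 8 = if Even U.card then 1 else 5 := by
  rw [Finset.prod_nat_mod, Finset.prod_congr rfl h, Finset.prod_const]
  rcases Nat.even_or_odd' U.card with ⟨k, hk | hk⟩
  · simp [hk, pow_mul, Nat.pow_mod]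
  · simp [hk, pow_succ, pow_mul, Nat.mul_mod, Nat.pow_mod]

end Residues

section Factorizations

theorem exists_mul_pow_of_coprime_of_mul_eq {m t x y k : ℕ} (hk : k ≠ 0) (hm : m ≠ 0)
    (hxy : x.Coprime y) (h : x * y = m * t ^ k) :
    ∃ d e r s, d * e = m ∧ x = d * r ^ k ∧ y = e * s ^ k ∧ r * s = t := by
  obtain ⟨d, e, ⟨x', rfl⟩, ⟨y', rfl⟩, rfl⟩ :=
    exists_dvd_and_dvd_of_dvd_mul (show m ∣ x * y from h ▸ dvd_mul_right m _)
  have hmul : x' * y' = t ^ k :=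
    Nat.eq_of_mul_eq_mul_left (Nat.pos_of_ne_zero hm) ((mul_mul_mul_comm d e x' y').trans h)
  have hcop : x'.Coprime y' := hxy.of_dvd (dvd_mul_left _ _) (dvd_mul_left _ _)
  obtain ⟨r, rfl⟩ := exists_eq_pow_of_mul_eq_pow (Nat.isUnit_iff.mpr hcop) hmul
  obtain ⟨s, rfl⟩ := exists_eq_pow_of_mul_eq_pow (Nat.isUnit_iff.mpr hcop.symm)
    ((mul_comm _ _).trans hmul)
  exact ⟨d, e, r, s, rfl, rfl, rfl, Nat.pow_left_injective hk (by simpa only [mul_pow] using hmul)⟩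

theorem exists_prod_compl_of_mul_eq_prod {ι M : Type*} [Fintype ι] [DecidableEq ι]
    [CommMonoidWithZero M] [IsCancelMulZero M] [Subsingleton Mˣ] {p : ι → M} {d e : M}
    (hp : ∀ i, Prime (p i)) (h : d * e = ∏ i, p i) :
    ∃ S : Finset ι, d = ∏ i ∈ S, p i ∧ e = ∏ i ∈ Sᶜ, p i := by
  obtain ⟨S, T, u, v, hST, hdisj, huv, rfl, rfl⟩ :=
    mul_eq_mul_prime_prod (a := 1) (fun i _ => hp i) (h.trans (one_mul _).symm)
  have hT : T = Sᶜ := (IsCompl.of_eq hdisj.eq_bot hST).symm.eq_compl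
  obtain ⟨rfl, rfl⟩ := mul_eq_one.mp huv.symm
  exact ⟨S, one_mul _, by rw [one_mul, hT]⟩

end Factorizations

section Pell

variable {m a b : ℕ}

theorem exists_mul_sq_of_pell_of_even (ha : Even a) (h : a ^ 2 = m * b ^ 2 + 1) :
    ∃ d e r s, d * e = m ∧ a = d * r ^ 2 + 1 ∧ e * s ^ 2 = d * r ^ 2 + 2 ∧ r * s = b ∧ Odd b := by
  have hodd : Odd (m * b ^ 2) :=
    Nat.not_even_iff_odd.mp (Nat.even_add_one.mp (h ▸ ha.pow_of_ne_zero two_ne_zero))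
  have hb : Odd b := Nat.Odd.of_mul_left (sq b ▸ Nat.Odd.of_mul_right hodd)
  obtain ⟨x, rfl⟩ : ∃ x, a = x + 1 :=
    Nat.exists_eq_add_one_of_ne_zero (by rintro rfl; simp at h)
  have hmul : x * (x + 2) = m * b ^ 2 := by linarith
  have hcop : x.Coprime (x + 2) := by
    rw [Nat.coprime_self_add_right, Nat.coprime_two_right]
    exact Nat.not_even_iff_odd.mp (Nat.even_add_one.mp ha)
  obtain ⟨d, e, r, s, hde, hx, hy, hrs⟩ :=
    exists_mul_pow_of_coprime_of_mul_eq two_ne_zero (left_ne_zero_of_mul hodd.pos.ne') hcop hmul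
  exact ⟨d, e, r, s, hde, by rw [hx], by rw [← hx, hy], hrs, hb⟩

theorem exists_mul_sq_of_pell_of_odd (hm : Odd m) (ha : Odd a) (h : a ^ 2 = m * b ^ 2 + 1) :
    ∃ d e r s, d * e = m ∧ a = 2 * (d * r ^ 2) + 1 ∧ e * s ^ 2 = d * r ^ 2 + 1 ∧
      b = 2 * (r * s) := by
  have heven : Even (m * b ^ 2) := Nat.not_odd_iff_even.mp (Nat.odd_add_one.mp (h ▸ ha.pow))
  have hb : Even b := by
    rcases Nat.even_mul.mp heven with hm' | hb
    · exact absurd hm' (Nat.not_even_iff_odd.mpr hm)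
    · exact (Nat.even_pow.mp hb).1
  obtain ⟨k, rfl⟩ := ha
  obtain ⟨t, rfl⟩ := hb.two_dvd
  have hmul : k * (k + 1) = m * t ^ 2 := by linarith
  obtain ⟨d, e, r, s, hde, hx, hy, hrs⟩ :=
    exists_mul_pow_of_coprime_of_mul_eq two_ne_zero hm.pos.ne' (by simp) hmul
  exact ⟨d, e, r, s, hde, by rw [hx], by rw [← hx, hy], by rw [hrs]⟩

theorem not_isSquare_of_pell_minimal (hm : m % 4 = 3) (hb : 0 < b) (h : a ^ 2 = m * b ^ 2 + 1)
    (hmin : ∀ a' b' : ℕ, 0 < a' → 0 < b' → a' ^ 2 = m * b' ^ 2 + 1 → a ≤ a') :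
    ¬ IsSquare (⟨a, b⟩ : ℤ√(m : ℤ)) := by
  rintro ⟨⟨s, r⟩, hsq⟩
  have ha_eq : (a : ℤ) = s * s + m * r * r := congrArg Zsqrtd.re hsq
  have hb_eq : (b : ℤ) = s * r + r * s := congrArg Zsqrtd.im hsq
  have hs : s ≠ 0 := by rintro rfl; lia
  have hr : r ≠ 0 := by rintro rfl; lia
  have hnorm : (s ^ 2 - m * r ^ 2) ^ 2 = 1 := by
    have h' : (a : ℤ) ^ 2 = m * b ^ 2 + 1 := by exact_mod_cast h
    rw [ha_eq, hb_eq] at h'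
    linear_combination h'
  rcases eq_or_eq_neg_of_sq_eq_sq _ 1 (hnorm.trans (one_pow 2).symm) with hpos | hneg
  · have hle : a ≤ s.natAbs := by
      refine hmin s.natAbs r.natAbs (Int.natAbs_pos.mpr hs) (Int.natAbs_pos.mpr hr) ?_
      zify
      simp only [sq_abs]
      linarith
    have hpos' : 0 < (m : ℤ) * r * r := by
      rw [mul_assoc]
      exact mul_pos (by lia) (mul_self_pos.mpr hr)
    have hsq_le : (s.natAbs : ℤ) ≤ s ^ 2 := Int.natAbs_le_self_sq s
    lia
  · exact mul_sq_ne_sq_add_one_of_mod_four_eq_three (m := m) (by lia) r s (by linarith)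

theorem exists_sq_eq_neg_one_add_eight_mul_sqrtd_iff (a b m : ℕ) :
    (∃ δ : ℤ√(m : ℤ), (⟨a, b⟩ : ℤ√(m : ℤ)) ^ 2 = -1 + 8 * Zsqrtd.sqrtd + 16 * δ) ↔
      (a ^ 2 + m * b ^ 2) % 16 = 15 ∧ a * b % 8 = 4 := by
  have hsub : (⟨a, b⟩ : ℤ√(m : ℤ)) ^ 2 - (-1 + 8 * Zsqrtd.sqrtd) =
      ⟨a ^ 2 + m * b ^ 2 + 1, 2 * (a * b) - 8⟩ := by
    ext
    · simp only [sq, Zsqrtd.re_sub, Zsqrtd.re_mul, Zsqrtd.re_add, Zsqrtd.re_neg, Zsqrtd.re_one,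
        Zsqrtd.re_ofNat, Zsqrtd.re_sqrtd, Zsqrtd.im_ofNat, Zsqrtd.im_sqrtd]
      ring
    · simp only [sq, Zsqrtd.im_sub, Zsqrtd.im_mul, Zsqrtd.im_add, Zsqrtd.im_neg, Zsqrtd.im_one,
        Zsqrtd.re_ofNat, Zsqrtd.im_sqrtd, Zsqrtd.im_ofNat, Zsqrtd.re_sqrtd]
      ring
  have hdvd : (∃ δ : ℤ√(m : ℤ), (⟨a, b⟩ : ℤ√(m : ℤ)) ^ 2 = -1 + 8 * Zsqrtd.sqrtd + 16 * δ) ↔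
      ((16 : ℤ) : ℤ√(m : ℤ)) ∣ ⟨a ^ 2 + m * b ^ 2 + 1, 2 * (a * b) - 8⟩ :=
    exists_congr fun δ => by rw [← sub_eq_iff_eq_add', hsub, Int.cast_ofNat]
  rw [hdvd, Zsqrtd.intCast_dvd]
  lia

end Pell

/-- The primes of the Deng–Li family, indexed by an arbitrary finite type: `i₁` and `i₂` are the
indices of `ℓ₁` and `ℓ₂`. By quadratic reciprocity the symbols among the other primes are the same
in both orders, so they are prescribed without ordering the index type. -/
structure IsDengLiFamily {ι : Type*} [Fintype ι] (l : ι → ℕ) (i₁ i₂ : ι) : Prop where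
  even_card : Even (Fintype.card ι)
  ne : i₂ ≠ i₁
  prime (i : ι) : (l i).Prime
  mod_eight_eq_three : l i₁ % 8 = 3
  mod_eight_eq_five {i : ι} (hi : i ≠ i₁) : l i % 8 = 5
  jacobiSym_first_second : J(l i₁ | l i₂) = -1
  jacobiSym_first {j : ι} (hj₁ : j ≠ i₁) (hj₂ : j ≠ i₂) : J(l i₁ | l j) = 1
  jacobiSym_of_ne {i j : ι} (hi : i ≠ i₁) (hj : j ≠ i₁) (hij : i ≠ j) : J(l i | l j) = -1

namespace IsDengLiFamily

variable {ι : Type*} [Fintype ι] {l : ι → ℕ} {i₁ i₂ i : ι} {U : Finset ι}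

theorem jacobiSym_prod_of_notMem (h : IsDengLiFamily l i₁ i₂) (hU : i₁ ∉ U) (hi : i ≠ i₁)
    (hiU : i ∉ U) : J((∏ j ∈ U, l j : ℕ) | l i) = (-1) ^ U.card := by
  rw [Nat.cast_prod, jacobiSym_prod_left, ← Finset.prod_const]
  exact Finset.prod_congr rfl fun j hj =>
    h.jacobiSym_of_ne (ne_of_mem_of_not_mem hj hU) hi (ne_of_mem_of_not_mem hj hiU)

theorem prod_mod_eight_of_notMem (h : IsDengLiFamily l i₁ i₂) (hU : i₁ ∉ U) :
    (∏ j ∈ U, l j) % 8 = if Even U.card then 1 else 5 :=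
  prod_mod_eight_of_forall_eq_five fun _ hj => h.mod_eight_eq_five (ne_of_mem_of_not_mem hj hU)

theorem jacobiSym_prod_of_mem (h : IsDengLiFamily l i₁ i₂) (hU : i₁ ∈ U) (hiU : i ∉ U) :
    J((∏ j ∈ U, l j : ℕ) | l i) = J(l i₁ | l i) * (-1) ^ (U.card + 1) := by
  classical
  have hi : i ≠ i₁ := (ne_of_mem_of_not_mem hU hiU).symm
  rw [← Finset.mul_prod_erase U l hU, Nat.cast_mul, jacobiSym.mul_left,
    h.jacobiSym_prod_of_notMem (Finset.notMem_erase i₁ U) hi (fun hmem => hiU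
      (Finset.mem_of_mem_erase hmem)), ← Finset.card_erase_add_one hU, add_assoc, pow_add]
  norm_num

theorem prod_mod_eight_of_mem (h : IsDengLiFamily l i₁ i₂) (hU : i₁ ∈ U) :
    (∏ j ∈ U, l j) % 8 = if Even U.card then 7 else 3 := by
  classical
  have hcard := Finset.card_erase_add_one hU
  rw [← Finset.mul_prod_erase U l hU, Nat.mul_mod, h.mod_eight_eq_three,
    h.prod_mod_eight_of_notMem (Finset.notMem_erase i₁ U), ← hcard]
  by_cases heven : Even (U.erase i₁).card <;> simp [heven, Nat.even_add_one]

theorem prod_mod_eight (h : IsDengLiFamily l i₁ i₂) : (∏ i, l i) % 8 = 7 := by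
  rw [h.prod_mod_eight_of_mem (Finset.mem_univ i₁), Finset.card_univ, if_pos h.even_card]

section Compl

variable [DecidableEq ι] {S : Finset ι}

theorem even_card_compl_iff (h : IsDengLiFamily l i₁ i₂) : Even Sᶜ.card ↔ Even S.card :=
  (Nat.even_add.mp (S.card_compl_add_card ▸ h.even_card))

theorem eq_univ_of_jacobiSym_prod_eq_one (h : IsDengLiFamily l i₁ i₂) (hS : i₁ ∈ S)
    (hcompl : ∀ i ∈ S, i ≠ i₁ → J((∏ j ∈ Sᶜ, l j : ℕ) | l i) = 1)
    (hself : ∀ i ∉ S, J((∏ j ∈ S, l j : ℕ) | l i) = 1) : S = Finset.univ := by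
  have hS' : i₁ ∉ Sᶜ := Finset.notMem_compl.mpr hS
  rcases Nat.even_or_odd S.card with heven | hodd
  · have hsub : Sᶜ ⊆ {i₂} := by
      intro i hi
      rw [Finset.mem_compl] at hi
      by_contra hne
      have hsym := hself i hi
      rw [h.jacobiSym_prod_of_mem hS hi, heven.add_one.neg_one_pow,
        h.jacobiSym_first (ne_of_mem_of_not_mem hS hi).symm (Finset.notMem_singleton.mp hne)]
        at hsym
      norm_num at hsym
    have hcard_le : Sᶜ.card ≤ 1 := Finset.card_le_card hsub
    have hcard_even : Even Sᶜ.card := h.even_card_compl_iff.mpr heven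
    rw [← Finset.compl_eq_empty_iff, ← Finset.card_eq_zero]
    grind
  · have hmem : ∀ i ∈ S, i = i₁ := by
      intro i hi
      by_contra hne
      have hodd' : Odd Sᶜ.card := by
        rwa [← Nat.not_even_iff_odd, h.even_card_compl_iff, Nat.not_even_iff_odd]
      have hsym := hcompl i hi hne
      rw [h.jacobiSym_prod_of_notMem hS' hne (Finset.notMem_compl.mpr hi),
        hodd'.neg_one_pow] at hsym
      norm_num at hsym
    have hi₂ : i₂ ∉ S := fun hi₂ => h.ne (hmem i₂ hi₂)
    have hsym := hself i₂ hi₂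
    rw [h.jacobiSym_prod_of_mem hS hi₂, hodd.add_one.neg_one_pow, mul_one,
      h.jacobiSym_first_second] at hsym
    norm_num at hsym

theorem jacobiSym_eq_of_mul_sq_eq_add {c r s : ℕ} (h : IsDengLiFamily l i₁ i₂)
    (hc : c.Coprime (l i))
    (heq : (∏ j ∈ Sᶜ, l j) * s ^ 2 = (∏ j ∈ S, l j) * r ^ 2 + c) (hi : i ≠ i₁) :
    (i ∈ S → J((∏ j ∈ Sᶜ, l j : ℕ) | l i) = J(c | l i)) ∧
      (i ∉ S → J((∏ j ∈ S, l j : ℕ) | l i) = J(c | l i)) := by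
  refine ⟨fun hiS => ?_, fun hiS => ?_⟩
  · exact jacobiSym_eq_of_mul_sq_eq_add_of_dvd_right heq (Finset.dvd_prod_of_mem l hiS) hc
  · have hmod := h.mod_eight_eq_five hi
    exact jacobiSym_eq_of_mul_sq_eq_add_of_dvd_left heq
      (Finset.dvd_prod_of_mem l (Finset.mem_compl.mpr hiS)) (by lia) hc

end Compl

theorem eq_one_or_eq_one_of_mul_sq_eq_add_one {d e r s : ℕ} (h : IsDengLiFamily l i₁ i₂)
    (hde : d * e = ∏ i, l i) (heq : e * s ^ 2 = d * r ^ 2 + 1) : d = 1 ∨ e = 1 := by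
  classical
  obtain ⟨S, rfl, rfl⟩ := exists_prod_compl_of_mul_eq_prod (fun i => (h.prime i).prime) hde
  have hsym {i : ι} (hi : i ≠ i₁) :=
    h.jacobiSym_eq_of_mul_sq_eq_add (Nat.coprime_one_left (l i)) heq hi
  simp only [Nat.cast_one, jacobiSym.one_left] at hsym
  by_cases hS : i₁ ∈ S
  · have huniv : S = Finset.univ := h.eq_univ_of_jacobiSym_prod_eq_one hS
      (fun i hiS hi => (hsym hi).1 hiS)
      (fun i hiS => (hsym (ne_of_mem_of_not_mem hS hiS).symm).2 hiS)
    simp [huniv]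
  · have huniv : Sᶜ = Finset.univ := h.eq_univ_of_jacobiSym_prod_eq_one
      (Finset.mem_compl.mpr hS)
      (fun i hiS hi => by simpa using (hsym hi).2 (Finset.mem_compl.mp hiS))
      (fun i hiS => (hsym (by rintro rfl; exact hiS (Finset.mem_compl.mpr hS))).1
        (Finset.notMem_compl.mp hiS))
    simp [Finset.compl_eq_univ_iff S |>.mp huniv]

theorem mod_eight_eq_three_of_mul_sq_eq_add_two {d e r s : ℕ} (h : IsDengLiFamily l i₁ i₂)
    (hde : d * e = ∏ i, l i) (hr : Odd r) (hs : Odd s) (heq : e * s ^ 2 = d * r ^ 2 + 2) :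
    d % 8 = 3 := by
  have hmod : e % 8 = (d + 2) % 8 := by
    have hes := mul_sq_mod_eight_of_odd e hs
    have hdr := mul_sq_mod_eight_of_odd d hr
    lia
  classical
  obtain ⟨S, rfl, rfl⟩ := exists_prod_compl_of_mul_eq_prod (fun i => (h.prime i).prime) hde
  by_cases hS : i₁ ∈ S
  · have hodd : Odd S.card := by
      by_contra hodd
      have heven : Even S.card := Nat.not_odd_iff_even.mp hodd
      obtain ⟨i, hiS, hi⟩ : ∃ i ∈ S, i ≠ i₁ :=
        S.exists_mem_ne (by have := Finset.card_pos.mpr ⟨i₁, hS⟩; grind) i₁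
      have hcop : Nat.Coprime 2 (l i) := by
        have := h.mod_eight_eq_five hi
        exact Nat.coprime_two_left.mpr (Nat.odd_iff.mpr (by lia))
      have hsym := (h.jacobiSym_eq_of_mul_sq_eq_add hcop heq hi).1 hiS
      rw [h.jacobiSym_prod_of_notMem (Finset.notMem_compl.mpr hS) hi
        (Finset.notMem_compl.mpr hiS), (h.even_card_compl_iff.mpr heven).neg_one_pow,
        Nat.cast_two, jacobiSym_two_of_mod_eight_eq_five (h.mod_eight_eq_five hi)] at hsym
      norm_num at hsym
    rw [h.prod_mod_eight_of_mem hS, if_neg (Nat.not_even_iff_odd.mpr hodd)]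
  · exfalso
    have hd := h.prod_mod_eight_of_notMem hS
    have he := h.prod_mod_eight_of_mem (Finset.mem_compl.mpr hS)
    simp only [h.even_card_compl_iff] at he
    split_ifs at hd he <;> lia

theorem even_of_pell_of_not_isSquare {m a b : ℕ} (h : IsDengLiFamily l i₁ i₂)
    (hm : m = ∏ i, l i) (hpell : a ^ 2 = m * b ^ 2 + 1)
    (hsq : ¬ IsSquare (⟨a, b⟩ : ℤ√(m : ℤ))) : Even a := by
  have hm8 : m % 8 = 7 := hm ▸ h.prod_mod_eight
  by_contra hodd
  obtain ⟨d, e, r, s, hde, ha, heq, hb⟩ := exists_mul_sq_of_pell_of_odd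
    (Nat.odd_iff.mpr (by lia)) (Nat.not_even_iff_odd.mp hodd) hpell
  rcases h.eq_one_or_eq_one_of_mul_sq_eq_add_one (hde.trans hm) heq with rfl | rfl
  · rw [one_mul] at hde heq
    refine mul_sq_ne_sq_add_one_of_mod_four_eq_three (m := m) (by lia) s r ?_
    rw [← hde]
    exact_mod_cast heq
  · rw [mul_one] at hde
    rw [one_mul] at heq
    have ha' : (a : ℤ) = s * s + m * r * r := by
      rw [ha, ← hde]
      push_cast
      linarith [(by exact_mod_cast heq : (s : ℤ) ^ 2 = d * r ^ 2 + 1)]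
    have hb' : (b : ℤ) = s * r + r * s := by
      rw [hb]
      push_cast
      ring
    exact hsq ⟨⟨s, r⟩, Zsqrtd.ext ha' hb'⟩

theorem mod_eight_eq_four_of_pell_of_even {m a b : ℕ} (h : IsDengLiFamily l i₁ i₂)
    (hm : m = ∏ i, l i) (hpell : a ^ 2 = m * b ^ 2 + 1) (ha : Even a) :
    a % 8 = 4 ∧ Odd b := by
  obtain ⟨d, e, r, s, hde, rfl, heq, rfl, hb⟩ := exists_mul_sq_of_pell_of_even ha hpell
  obtain ⟨hr, hs⟩ := Nat.odd_mul.mp hb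
  have hd : d % 8 = 3 := h.mod_eight_eq_three_of_mul_sq_eq_add_two (hde.trans hm) hr hs heq
  have hdr := mul_sq_mod_eight_of_odd d hr
  exact ⟨by lia, hb⟩

end IsDengLiFamily

theorem isDengLiFamily_of_fin {n : ℕ} (hn : 2 ≤ n) (hneven : Even n) {l : Fin n → ℕ}
    (hlp : ∀ i, (l i).Prime) (hl1 : l ⟨0, by lia⟩ % 8 = 3)
    (hli : ∀ i : Fin n, i ≠ ⟨0, by lia⟩ → l i % 8 = 5)
    (hleg12 : J(l ⟨0, by lia⟩ | l ⟨1, by lia⟩) = -1)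
    (hleg1j : ∀ j : Fin n, 2 ≤ (j : ℕ) → J(l ⟨0, by lia⟩ | l j) = 1)
    (hlegij : ∀ i j : Fin n, 1 ≤ (i : ℕ) → i < j → J(l i | l j) = -1) :
    IsDengLiFamily l ⟨0, by lia⟩ ⟨1, by lia⟩ where
  even_card := by rwa [Fintype.card_fin]
  ne := by simp
  prime := hlp
  mod_eight_eq_three := hl1
  mod_eight_eq_five := hli _
  jacobiSym_first_second := hleg12
  jacobiSym_first {j} hj₁ hj₂ := hleg1j j (by simp only [ne_eq, Fin.ext_iff] at hj₁ hj₂; lia)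
  jacobiSym_of_ne {i j} hi hj hij := by
    have hi5 := hli i hi
    have hj5 := hli j hj
    simp only [ne_eq, Fin.ext_iff] at hi hj
    rcases lt_or_gt_of_ne hij with hlt | hgt
    · exact hlegij i j (by lia) hlt
    · rw [jacobiSym.quadratic_reciprocity_one_mod_four (by lia) (Nat.odd_iff.mpr (by lia))]
      exact hlegij j i (by lia) hgt

/-- The solutions in natural numbers that are not squares are the odd powers of the fundamental
unit. -/
theorem dengLi_fundamental_unit_congruence_general {ι : Type*} [Fintype ι] {l : ι → ℕ}
    {i₁ i₂ : ι} (h : IsDengLiFamily l i₁ i₂) {m a b : ℕ} (hm : m = ∏ i, l i)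
    (hpell : a ^ 2 = m * b ^ 2 + 1) (hsq : ¬ IsSquare (⟨a, b⟩ : ℤ√(m : ℤ))) :
    (a ^ 2 + m * b ^ 2) % 16 = 15 ∧ (a * b) % 8 = 4 ∧
    ∃ δ : ℤ√(m : ℤ), (⟨a, b⟩ : ℤ√(m : ℤ)) ^ 2 = -1 + 8 * Zsqrtd.sqrtd + 16 * δ := by
  obtain ⟨ha, hb⟩ := h.mod_eight_eq_four_of_pell_of_even hm hpell
    (h.even_of_pell_of_not_isSquare hm hpell hsq)
  obtain ⟨u, rfl⟩ : ∃ u, a = 8 * u + 4 := ⟨a / 8, by lia⟩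
  obtain ⟨v, rfl⟩ := hb
  have hre : ((8 * u + 4) ^ 2 + m * (2 * v + 1) ^ 2) % 16 = 15 := by lia
  have him : (8 * u + 4) * (2 * v + 1) % 8 = 4 := by lia
  exact ⟨hre, him, (exists_sq_eq_neg_one_add_eight_mul_sqrtd_iff _ _ m).mpr ⟨hre, him⟩⟩

/-- **Deng–Li family: the key 2-adic congruence on the fundamental unit.** One has
`a² + m·b² ≡ 15 (mod 16)` and `a·b ≡ 4 (mod 8)`; equivalently
`ε² ≡ −1 + 8√m (mod 16·ℤ[√m])`. -/
theorem dengLi_fundamental_unit_congruence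
    (n : ℕ) (hn : 2 ≤ n) (hneven : Even n)
    (l : Fin n → ℕ) (hlp : ∀ i, (l i).Prime) (hlinj : Function.Injective l)
    (hl1 : l ⟨0, by omega⟩ % 8 = 3)
    (hli : ∀ i : Fin n, i ≠ ⟨0, by omega⟩ → l i % 8 = 5)
    (hleg12 : jacobiSym (l ⟨0, by omega⟩ : ℤ) (l ⟨1, by omega⟩) = -1)
    (hleg1j : ∀ j : Fin n, 2 ≤ (j : ℕ) → jacobiSym (l ⟨0, by omega⟩ : ℤ) (l j) = 1)
    (hlegij : ∀ i j : Fin n, 1 ≤ (i : ℕ) → i < j → jacobiSym (l i : ℤ) (l j) = -1)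
    (m : ℕ) (hm : m = ∏ i, l i)
    (a b : ℕ) (ha : 0 < a) (hb : 0 < b) (hpell : a ^ 2 = m * b ^ 2 + 1)
    (hmin : ∀ a' b' : ℕ, 0 < a' → 0 < b' → a' ^ 2 = m * b' ^ 2 + 1 → a ≤ a') :
    (a ^ 2 + m * b ^ 2) % 16 = 15 ∧ (a * b) % 8 = 4 ∧
    ∃ δ : Zsqrtd (m : ℤ), (⟨(a : ℤ), (b : ℤ)⟩ : Zsqrtd (m : ℤ)) ^ 2
        = -1 + 8 * Zsqrtd.sqrtd + 16 * δ := by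
  have h := isDengLiFamily_of_fin hn hneven hlp hl1 hli hleg12 hleg1j hlegij
  have hm8 : m % 8 = 7 := hm ▸ h.prod_mod_eight
  exact dengLi_fundamental_unit_congruence_general h hm hpell
    (not_isSquare_of_pell_minimal (by lia) hb hpell hmin)
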